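/- With Apéry's sequences B_n, A_n for ζ(2), one has ∑_{n=0}^∞ (B_n·ζ(2) − A_n) = ∑_{n=0}^∞ ∑_{k=0}^∞ (−1)^n·C(n+k,n) / ( (2n+k+1)² · C(2n+k,n)² ). -/

import Mathlib

open Finset Real

/-- Apéry's denominators for `ζ(2)`: `Bₙ = ∑_{k=0}^n C(n,k)² C(n+k,k)`. -/
noncomputable def aperyB2 (n : ℕ) : ℝ :=
  ∑ k ∈ range (n + 1), (Nat.choose n k : ℝ) ^ 2 * (Nat.choose (n + k) k : ℝ)

/-- Apéry's numerators for `ζ(2)`: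
`Aₙ = ∑_{k=0}^n C(n,k)² C(n+k,k) (2 ∑_{m=1}^n (−1)^{m−1}/m²
  + ∑_{m=1}^k (−1)^{n+m−1}/(m² C(n,m) C(n+m,m)))`. -/
noncomputable def aperyA2 (n : ℕ) : ℝ :=
  ∑ k ∈ range (n + 1), (Nat.choose n k : ℝ) ^ 2 * (Nat.choose (n + k) k : ℝ) *
    (2 * (∑ m ∈ Icc 1 n, (-1 : ℝ) ^ (m - 1) / (m : ℝ) ^ 2)
      + ∑ m ∈ Icc 1 k,
          (-1 : ℝ) ^ (n + m - 1) /
            ((m : ℝ) ^ 2 * (Nat.choose n m : ℝ) * (Nat.choose (n + m) m : ℝ)))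


/-- Factorial form of the summand of the double series. -/
noncomputable def tS (n k : ℕ) : ℝ :=
  (-1 : ℝ) ^ n * ((n + k).factorial : ℝ) ^ 3 * (n.factorial : ℝ) /
    ((k.factorial : ℝ) * ((2 * n + k + 1).factorial : ℝ) ^ 2)

/-- Polynomial part of the Zeilberger certificate. -/
noncomputable def qS (n k : ℝ) : ℝ :=
  (-840 - 3548 * n - 6130 * n ^ 2 - 5549 * n ^ 3 - 2779 * n ^ 4 - 731 * n ^ 5 - 79 * n ^ 6)
  + (-1760 - 5960 * n - 7942 * n ^ 2 - 5217 * n ^ 3 - 1692 * n ^ 4 - 217 * n ^ 5) * k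
  + (-1317 - 3427 * n - 3317 * n ^ 2 - 1416 * n ^ 3 - 225 * n ^ 4) * k ^ 2
  + (-397 - 758 * n - 482 * n ^ 2 - 102 * n ^ 3) * k ^ 3
  + (-30 - 39 * n - 13 * n ^ 2) * k ^ 4 + (7 + 4 * n) * k ^ 5 + k ^ 6

noncomputable def rS (n k : ℝ) : ℝ :=
  k * (n + 1) * qS n k / ((2 * n + k + 2) * (2 * n + k + 3) * (2 * n + k + 4)) ^ 2

lemma tS_succ_left (n k : ℕ) : tS (n + 1) k =
    tS n k * (-((n + k + 1 : ℝ) ^ 3 * (n + 1)) / ((2 * n + k + 2) * (2 * n + k + 3)) ^ 2) := by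
  unfold tS
  rw [show n + 1 + k = n + k + 1 by ring, show 2 * (n + 1) + k + 1 = 2 * n + k + 1 + 1 + 1 by ring]
  simp only [Nat.factorial_succ (n + k), Nat.factorial_succ n, Nat.factorial_succ (2 * n + k + 1),
    Nat.factorial_succ (2 * n + k + 1 + 1)]
  have h1 : (k.factorial : ℝ) ≠ 0 := by positivity
  have h2 : ((2 * n + k + 1).factorial : ℝ) ≠ 0 := by positivity
  have h3 : (2 * n + k + 2 : ℝ) ≠ 0 := by positivity
  have h4 : (2 * n + k + 3 : ℝ) ≠ 0 := by positivity
  push_cast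
  rw [show (2 * n + k + 1 + 1 : ℝ) = 2 * n + k + 2 by ring,
    show (2 * n + k + 2 + 1 : ℝ) = 2 * n + k + 3 by ring]
  generalize ((2 * n + k + 1).factorial : ℝ) = c at *
  field_simp
  ring

lemma tS_succ_right (n k : ℕ) : tS n (k + 1) =
    tS n k * ((n + k + 1 : ℝ) ^ 3 / ((k + 1) * (2 * n + k + 2) ^ 2)) := by
  unfold tS
  rw [show n + (k + 1) = n + k + 1 by ring, show 2 * n + (k + 1) + 1 = 2 * n + k + 1 + 1 by ring]
  simp only [Nat.factorial_succ (n + k), Nat.factorial_succ k, Nat.factorial_succ (2 * n + k + 1)]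
  have h1 : (k.factorial : ℝ) ≠ 0 := by positivity
  have h2 : ((2 * n + k + 1).factorial : ℝ) ≠ 0 := by positivity
  have h3 : (2 * n + k + 2 : ℝ) ≠ 0 := by positivity
  push_cast
  rw [show (2 * n + k + 1 + 1 : ℝ) = 2 * n + k + 2 by ring]
  generalize ((2 * n + k + 1).factorial : ℝ) = c at *
  field_simp

lemma tS_cert (n k : ℕ) :
    ((n : ℝ) + 2) ^ 2 * tS (n + 2) k - (11 * ((n : ℝ) + 1) ^ 2 + 11 * ((n : ℝ) + 1) + 3) * tS (n + 1) k
      - ((n : ℝ) + 1) ^ 2 * tS n k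
      = tS n (k + 1) * rS n ((k + 1 : ℕ) : ℝ) - tS n k * rS n k := by
  rw [show n + 2 = n + 1 + 1 by ring, tS_succ_left (n + 1), tS_succ_left n, tS_succ_right]
  unfold rS qS
  push_cast
  generalize tS n k = T
  have hn : (0 : ℝ) ≤ n := Nat.cast_nonneg n
  have hk : (0 : ℝ) ≤ k := Nat.cast_nonneg k
  generalize (n : ℝ) = x at *
  generalize (k : ℝ) = y at *
  rw [show 2 * (x + 1) + y + 2 = 2 * x + y + 4 by ring, show 2 * (x + 1) + y + 3 = 2 * x + y + 5 by ring,
    show 2 * x + (y + 1) + 2 = 2 * x + y + 3 by ring, show 2 * x + (y + 1) + 3 = 2 * x + y + 4 by ring,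
    show 2 * x + (y + 1) + 4 = 2 * x + y + 5 by ring]
  have h1 : 2 * x + y + 2 ≠ 0 := by positivity
  have h3 : 2 * x + y + 3 ≠ 0 := by positivity
  have h4 : 2 * x + y + 4 ≠ 0 := by positivity
  have h5 : 2 * x + y + 5 ≠ 0 := by positivity
  have h6 : y + 1 ≠ 0 := by positivity
  field_simp
  ring

lemma tS_eq (n k : ℕ) : (-1 : ℝ) ^ n * (Nat.choose (n + k) n : ℝ) /
            ((2 * (n : ℝ) + k + 1) ^ 2 * (Nat.choose (2 * n + k) n : ℝ) ^ 2) = tS n k := by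
  have e1 : (Nat.choose (n + k) n : ℝ) = (n + k).factorial / (n.factorial * k.factorial) := by
    rw [Nat.cast_add_choose]
  have e2 : (Nat.choose (2 * n + k) n : ℝ) =
      (2 * n + k).factorial / (n.factorial * (n + k).factorial) := by
    rw [show 2 * n + k = n + (n + k) by ring, Nat.cast_add_choose]
  unfold tS
  rw [e1, e2, Nat.factorial_succ]
  have h1 : (k.factorial : ℝ) ≠ 0 := by positivity
  have h2 : ((2 * n + k).factorial : ℝ) ≠ 0 := by positivity
  have h3 : (n.factorial : ℝ) ≠ 0 := by positivity
  have h4 : ((n + k).factorial : ℝ) ≠ 0 := by positivity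
  have h5 : (2 * n + k + 1 : ℝ) ≠ 0 := by positivity
  push_cast
  field_simp

lemma tS_bound (n k : ℕ) : |tS n k| ≤ 1 / ((k : ℝ) + 1) ^ 2 := by
  rw [← tS_eq, abs_div, abs_mul, abs_pow, abs_neg, abs_one, one_pow, one_mul, abs_of_nonneg (by positivity),
    abs_of_nonneg (by positivity)]
  have h1 : (Nat.choose (n + k) n : ℝ) ≤ (Nat.choose (2 * n + k) n : ℝ) := by
    exact_mod_cast Nat.choose_le_choose n (by omega)
  have h2 : (1 : ℝ) ≤ (Nat.choose (2 * n + k) n : ℝ) := by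
    exact_mod_cast Nat.choose_pos (by omega)
  have hn : (0 : ℝ) ≤ n := Nat.cast_nonneg n
  have hk : (0 : ℝ) ≤ k := Nat.cast_nonneg k
  generalize (Nat.choose (2 * n + k) n : ℝ) = c at *
  rw [div_le_div_iff₀ (by positivity) (by positivity), one_mul, mul_comm]
  have : (k + 1 : ℝ) ^ 2 ≤ (2 * n + k + 1) ^ 2 := by gcongr; linarith
  have h3 : (Nat.choose (n + k) n : ℝ) ≤ c ^ 2 := by nlinarith
  exact mul_le_mul this h3 (by positivity) (by positivity)

lemma summ_sq : Summable (fun k : ℕ => 1 / ((k : ℝ) + 1) ^ 2) := by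
  have := (summable_nat_add_iff 1).mpr (Real.summable_one_div_nat_pow (p := 2).mpr (by norm_num))
  simpa using this

lemma tS_summable (n : ℕ) : Summable (tS n) :=
  Summable.of_abs (Summable.of_nonneg_of_le (fun _ => abs_nonneg _) (tS_bound n) summ_sq)

lemma tS_rS_bound (n : ℕ) : ∃ M : ℝ, ∀ k : ℕ, |tS n k * rS n k| ≤ M * (1 / ((k : ℝ) + 1)) := by
  obtain ⟨M, hM0, hM⟩ : ∃ M : ℝ, 0 ≤ M ∧ ∀ k : ℕ, |qS n k| ≤ M * ((k : ℝ) + 1) ^ 6 := by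
    refine ⟨|-840 - 3548 * (n : ℝ) - 6130 * n ^ 2 - 5549 * n ^ 3 - 2779 * n ^ 4 - 731 * n ^ 5 - 79 * n ^ 6|
      + |-1760 - 5960 * (n : ℝ) - 7942 * n ^ 2 - 5217 * n ^ 3 - 1692 * n ^ 4 - 217 * n ^ 5|
      + |-1317 - 3427 * (n : ℝ) - 3317 * n ^ 2 - 1416 * n ^ 3 - 225 * n ^ 4|
      + |-397 - 758 * (n : ℝ) - 482 * n ^ 2 - 102 * n ^ 3|
      + |-30 - 39 * (n : ℝ) - 13 * n ^ 2| + |7 + 4 * (n : ℝ)| + 1, by positivity, fun k => ?_⟩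
    have hk : (0 : ℝ) ≤ k := Nat.cast_nonneg k
    have hp : ∀ i ≤ 6, (k : ℝ) ^ i ≤ (k + 1) ^ 6 := fun i hi =>
      (pow_le_pow_left₀ hk (by linarith) i).trans (pow_le_pow_right₀ (by linarith) hi)
    have hm : ∀ (a : ℝ) (i : ℕ), i ≤ 6 → |a * (k : ℝ) ^ i| ≤ |a| * (k + 1) ^ 6 := fun a i hi => by
      rw [abs_mul, abs_of_nonneg (by positivity : (0 : ℝ) ≤ (k : ℝ) ^ i)]
      exact mul_le_mul_of_nonneg_left (hp i hi) (abs_nonneg _)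
    have h6 : |(k : ℝ) ^ 6| ≤ 1 * (k + 1) ^ 6 := by simpa using hm 1 6 le_rfl
    unfold qS
    refine (abs_add_le _ _).trans ?_
    refine le_trans ?_ (add_mul _ _ _).ge
    refine add_le_add ?_ h6
    refine (abs_add_le _ _).trans ?_
    refine le_trans ?_ (add_mul _ _ _).ge
    refine add_le_add ?_ (hm _ 5 (by norm_num))
    refine (abs_add_le _ _).trans ?_
    refine le_trans ?_ (add_mul _ _ _).ge
    refine add_le_add ?_ (hm _ 4 (by norm_num))
    refine (abs_add_le _ _).trans ?_
    refine le_trans ?_ (add_mul _ _ _).ge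
    refine add_le_add ?_ (hm _ 3 (by norm_num))
    refine (abs_add_le _ _).trans ?_
    refine le_trans ?_ (add_mul _ _ _).ge
    refine add_le_add ?_ (hm _ 2 (by norm_num))
    refine (abs_add_le _ _).trans ?_
    refine le_trans ?_ (add_mul _ _ _).ge
    refine add_le_add ?_ ?_
    · simpa using hm _ 0 (by norm_num)
    · simpa using hm _ 1 (by norm_num)
  refine ⟨(n + 1) * M, fun k => ?_⟩
  have hn : (0 : ℝ) ≤ n := Nat.cast_nonneg n
  have hk : (0 : ℝ) ≤ k := Nat.cast_nonneg k
  have hr : |rS n k| ≤ ((k : ℝ) + 1) * ((n + 1) * M) := by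
    unfold rS
    rw [abs_div, abs_mul, abs_of_nonneg (by positivity : (0 : ℝ) ≤ k * (n + 1)),
      abs_of_nonneg (by positivity : (0 : ℝ) ≤ ((2 * n + k + 2 : ℝ) * (2 * n + k + 3) * (2 * n + k + 4)) ^ 2),
      div_le_iff₀ (by positivity)]
    have hd : ((k : ℝ) + 1) ^ 6 ≤ ((2 * n + k + 2 : ℝ) * (2 * n + k + 3) * (2 * n + k + 4)) ^ 2 := by
      calc ((k : ℝ) + 1) ^ 6 = (((k : ℝ) + 1) * (k + 1) * (k + 1)) ^ 2 := by ring
        _ ≤ _ := by gcongr <;> linarith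
    calc (k : ℝ) * (n + 1) * |qS n k| ≤ (k + 1) * (n + 1) * (M * ((k : ℝ) + 1) ^ 6) := by
          gcongr
          · linarith
          · exact hM k
      _ ≤ (k + 1) * (n + 1) * (M * ((2 * n + k + 2 : ℝ) * (2 * n + k + 3) * (2 * n + k + 4)) ^ 2) := by
          gcongr
      _ = _ := by ring
  rw [abs_mul]
  calc |tS n k| * |rS n k| ≤ (1 / ((k : ℝ) + 1) ^ 2) * (((k : ℝ) + 1) * ((n + 1) * M)) :=
        mul_le_mul (tS_bound n k) hr (abs_nonneg _) (by positivity)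
    _ = _ := by field_simp

lemma tS_rS_tendsto (n : ℕ) :
    Filter.Tendsto (fun k : ℕ => tS n k * rS n k) Filter.atTop (nhds 0) := by
  obtain ⟨M, hM⟩ := tS_rS_bound n
  refine squeeze_zero_norm hM ?_
  simpa using (tendsto_one_div_add_atTop_nhds_zero_nat (𝕜 := ℝ)).const_mul M

/-- The remainder series. -/
noncomputable def RS (n : ℕ) : ℝ := ∑' k : ℕ, tS n k

lemma RS_rec (n : ℕ) :
    ((n : ℝ) + 2) ^ 2 * RS (n + 2) - (11 * ((n : ℝ) + 1) ^ 2 + 11 * ((n : ℝ) + 1) + 3) * RS (n + 1)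
      - ((n : ℝ) + 1) ^ 2 * RS n = 0 := by
  have h := ((((tS_summable (n + 2)).hasSum.mul_left (((n : ℝ) + 2) ^ 2)).sub
    ((tS_summable (n + 1)).hasSum.mul_left (11 * ((n : ℝ) + 1) ^ 2 + 11 * ((n : ℝ) + 1) + 3))).sub
    ((tS_summable n).hasSum.mul_left (((n : ℝ) + 1) ^ 2))).tendsto_sum_nat
  simp only [tS_cert] at h
  have h2 : ∀ m : ℕ, ∑ k ∈ range m, (tS n (k + 1) * rS n ((k + 1 : ℕ) : ℝ) - tS n k * rS n k)
      = tS n m * rS n m := fun m => by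
    rw [Finset.sum_range_sub (fun k : ℕ => tS n k * rS n k)]
    simp [rS]
  simp only [h2] at h
  exact tendsto_nhds_unique h (tS_rS_tendsto n)

lemma RS_zero : RS 0 = π ^ 2 / 6 := by
  have h := (hasSum_nat_add_iff' 1).mpr hasSum_zeta_two
  unfold RS
  rw [← (by simpa using h.tsum_eq : ∑' k : ℕ, (((k : ℝ) + 1) ^ 2)⁻¹ = π ^ 2 / 6)]
  refine tsum_congr fun k => ?_
  rw [← tS_eq]
  simp

lemma RS_one : RS 1 = 3 * (π ^ 2 / 6) - 5 := by
  have h2 := (hasSum_nat_add_iff' 2).mpr hasSum_zeta_two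
  have h3 := (hasSum_nat_add_iff' 3).mpr hasSum_zeta_two
  have h4 : HasSum (fun k : ℕ => 3 / ((k : ℝ) + 3) - 3 / ((k : ℝ) + 2)) (0 - 3 / 2) := by
    have h := tS_summable 1
    have hs : Summable (fun k : ℕ => 3 / ((k : ℝ) + 3) - 3 / ((k : ℝ) + 2)) := by
      refine Summable.of_abs (Summable.of_nonneg_of_le (fun _ => abs_nonneg _) (fun k => ?_)
        (summ_sq.mul_left 3))
      have hk : (0 : ℝ) ≤ k := Nat.cast_nonneg k
      have : 3 / ((k : ℝ) + 3) - 3 / ((k : ℝ) + 2) = - (3 * (1 / ((k + 3) * (k + 2)))) := by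
        field_simp; ring
      rw [this, abs_neg, abs_of_nonneg (by positivity)]
      gcongr
      nlinarith
    have ht := hs.hasSum.tendsto_sum_nat
    have he : ∀ m : ℕ, ∑ k ∈ range m, (3 / ((k : ℝ) + 3) - 3 / ((k : ℝ) + 2))
      = 3 / ((m : ℝ) + 2) - 3 / 2 := fun m => by
      have := Finset.sum_range_sub (fun k : ℕ => 3 / ((k : ℝ) + 2)) m
      simp only [Nat.cast_add, Nat.cast_one, Nat.cast_zero, zero_add, add_assoc] at this
      norm_num at this ⊢
      exact this
    simp only [he] at ht
    have hl : Filter.Tendsto (fun m : ℕ => 3 / ((m : ℝ) + 2) - 3 / 2) Filter.atTop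
        (nhds (0 - 3 / 2)) := by
      refine Filter.Tendsto.sub_const ?_ _
      exact Filter.Tendsto.div_atTop tendsto_const_nhds
        (Filter.tendsto_atTop_add_const_right _ _ tendsto_natCast_atTop_atTop)
    rw [← tendsto_nhds_unique ht hl]
    exact hs.hasSum
  have h := (h2.add (h3.mul_left 2)).add h4
  have e : (fun k : ℕ => 1 / ((k + 2 : ℕ) : ℝ) ^ 2 + 2 * (1 / ((k + 3 : ℕ) : ℝ) ^ 2)
      + (3 / ((k : ℝ) + 3) - 3 / ((k : ℝ) + 2))) = tS 1 := by
    funext k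
    rw [← tS_eq]
    have hk : (0 : ℝ) ≤ k := Nat.cast_nonneg k
    rw [Nat.choose_one_right, Nat.choose_one_right]
    push_cast
    rw [mul_one (2 : ℝ)]
    rw [show (2 + k + 1 : ℝ) = k + 3 by ring, add_comm (2 : ℝ) k]
    field_simp
    ring
  rw [e] at h
  unfold RS
  rw [h.tsum_eq]
  norm_num [Finset.sum_range_succ]
  ring

/-- Summand of Apéry's denominators. -/
noncomputable def bS (n k : ℕ) : ℝ := (Nat.choose n k : ℝ) ^ 2 * (Nat.choose (n + k) k : ℝ)

/-- Apéry's `c_{n,k}`. -/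
noncomputable def cS (n k : ℕ) : ℝ :=
  2 * (∑ m ∈ Icc 1 n, (-1 : ℝ) ^ (m - 1) / (m : ℝ) ^ 2)
      + ∑ m ∈ Icc 1 k,
          (-1 : ℝ) ^ (n + m - 1) /
            ((m : ℝ) ^ 2 * (Nat.choose n m : ℝ) * (Nat.choose (n + m) m : ℝ))

lemma choose_fac (k j : ℕ) :
    (Nat.choose (k + j) k : ℝ) = (k + j).factorial / (k.factorial * j.factorial) := by
  rw [Nat.cast_add_choose]

lemma choose_fac2 (k j : ℕ) :
    (Nat.choose (k + j + k) k : ℝ)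
      = (2 * k + j).factorial / (k.factorial * (k + j).factorial) := by
  rw [show k + j + k = k + (k + j) by ring, Nat.cast_add_choose,
    show k + (k + j) = 2 * k + j by ring]

lemma bS_fac (k j : ℕ) : bS (k + j) k =
    (k + j).factorial * (2 * k + j).factorial / (k.factorial ^ 3 * j.factorial ^ 2) := by
  unfold bS
  rw [choose_fac, choose_fac2]
  have h1 : (k.factorial : ℝ) ≠ 0 := by positivity
  have h2 : (j.factorial : ℝ) ≠ 0 := by positivity
  have h3 : ((k + j).factorial : ℝ) ≠ 0 := by positivity
  field_simp

lemma cS_right (k j : ℕ) : cS (k + 1 + j) (k + 1) - cS (k + 1 + j) k =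
    -(-1) ^ j * (k.factorial : ℝ) ^ 2 * j.factorial / (2 * k + j + 2).factorial := by
  unfold cS
  rw [Finset.sum_Icc_succ_top (by omega : 1 ≤ k + 1), choose_fac, choose_fac2,
    show k + 1 + j + (k + 1) - 1 = 2 * k + (j + 1) by omega, pow_add, pow_mul, pow_succ]
  rw [show 2 * (k + 1) + j = 2 * k + j + 2 by ring, Nat.factorial_succ k]
  have h1 : (k.factorial : ℝ) ≠ 0 := by positivity
  have h2 : (j.factorial : ℝ) ≠ 0 := by positivity
  have h3 : ((k + 1 + j).factorial : ℝ) ≠ 0 := by positivity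
  have h4 : ((2 * k + j + 2).factorial : ℝ) ≠ 0 := by positivity
  push_cast
  field_simp
  ring

lemma cS_left (k : ℕ) : ∀ j : ℕ, cS (k + j + 1) k - cS (k + j) k =
    2 * (-1) ^ j * (k.factorial : ℝ) ^ 2 * j.factorial /
      ((k + j + 1 : ℝ) * (2 * k + j + 1).factorial) := by
  induction k with
  | zero =>
    intro j
    unfold cS
    rw [Finset.sum_Icc_succ_top (by omega : 1 ≤ 0 + j + 1)]
    simp [Nat.factorial_succ]
    have h2 : (j.factorial : ℝ) ≠ 0 := by positivity
    field_simp
    ring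
  | succ k ih =>
    intro j
    have h1 := cS_right k (j + 1)
    have h2 := cS_right k j
    have h3 := ih (j + 1)
    rw [show k + 1 + (j + 1) = k + 1 + j + 1 by ring] at h1
    rw [show k + (j + 1) = k + 1 + j by ring] at h3
    have e : cS (k + 1 + j + 1) (k + 1) - cS (k + 1 + j) (k + 1) =
      (cS (k + 1 + j + 1) (k + 1) - cS (k + 1 + j + 1) k) + (cS (k + 1 + j + 1) k - cS (k + 1 + j) k)
       - (cS (k + 1 + j) (k + 1) - cS (k + 1 + j) k) := by ring
    rw [e, h1, h2, h3]
    rw [show 2 * k + (j + 1) + 2 = 2 * k + j + 2 + 1 by ring,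
      show 2 * k + (j + 1) + 1 = 2 * k + j + 2 by ring,
      show 2 * (k + 1) + j + 1 = 2 * k + j + 2 + 1 by ring,
      Nat.factorial_succ (2 * k + j + 2), Nat.factorial_succ k, Nat.factorial_succ j]
    have h4 : ((2 * k + j + 2).factorial : ℝ) ≠ 0 := by positivity
    have h5 : (2 * k + j + 3 : ℝ) ≠ 0 := by positivity
    have h6 : (k + j + 2 : ℝ) ≠ 0 := by positivity
    push_cast
    rw [show (2 * k + j + 2 + 1 : ℝ) = 2 * k + j + 3 by ring,
      show (k + (j + 1) + 1 : ℝ) = k + j + 2 by ring,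
      show (k + 1 + j + 1 : ℝ) = k + j + 2 by ring]
    generalize ((2 * k + j + 2).factorial : ℝ) = F at *
    field_simp
    ring

lemma bS_up (k j : ℕ) : bS (k + j + 1) k =
    bS (k + j) k * ((k + j + 1) * (2 * k + j + 1) / (j + 1) ^ 2) := by
  rw [show k + j + 1 = k + (j + 1) by ring, bS_fac, bS_fac,
    show k + (j + 1) = k + j + 1 by ring, show 2 * k + (j + 1) = 2 * k + j + 1 by ring,
    Nat.factorial_succ, Nat.factorial_succ, Nat.factorial_succ]
  have h1 : (k.factorial : ℝ) ≠ 0 := by positivity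
  have h2 : (j.factorial : ℝ) ≠ 0 := by positivity
  push_cast
  field_simp

lemma bS_right (k j : ℕ) : bS (k + 1 + j) k =
    bS (k + 1 + j) (k + 1) * ((k + 1) ^ 3 / ((j + 1) ^ 2 * (2 * k + j + 2))) := by
  rw [bS_fac, show k + 1 + j = k + (j + 1) by ring, bS_fac,
    show 2 * (k + 1) + j = 2 * k + j + 1 + 1 by ring, show 2 * k + (j + 1) = 2 * k + j + 1 by ring,
    Nat.factorial_succ (2 * k + j + 1), Nat.factorial_succ k, Nat.factorial_succ j]
  have h1 : (k.factorial : ℝ) ≠ 0 := by positivity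
  have h2 : (j.factorial : ℝ) ≠ 0 := by positivity
  have h3 : (2 * k + j + 2 : ℝ) ≠ 0 := by positivity
  push_cast
  rw [show (2 * k + j + 1 + 1 : ℝ) = 2 * k + j + 2 by ring]
  field_simp

lemma choose_right (k j : ℕ) : (Nat.choose (k + 1 + j) k : ℝ) =
    Nat.choose (k + 1 + j) (k + 1) * ((k + 1) / (j + 1)) := by
  rw [choose_fac, show k + 1 + j = k + (j + 1) by ring, choose_fac,
    Nat.factorial_succ k, Nat.factorial_succ j]
  have h1 : (k.factorial : ℝ) ≠ 0 := by positivity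
  have h2 : (j.factorial : ℝ) ≠ 0 := by positivity
  push_cast
  field_simp

/-- `b * (c-difference)` upward. -/
lemma bc_up (k j : ℕ) : bS (k + j) k * (cS (k + j + 1) k - cS (k + j) k) =
    2 * (-1) ^ j * Nat.choose (k + j) k / ((k + j + 1) * (2 * k + j + 1)) := by
  rw [cS_left, bS_fac, choose_fac, Nat.factorial_succ (2 * k + j)]
  have h1 : (k.factorial : ℝ) ≠ 0 := by positivity
  have h2 : (j.factorial : ℝ) ≠ 0 := by positivity
  have h3 : ((2 * k + j).factorial : ℝ) ≠ 0 := by positivity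
  push_cast
  field_simp

lemma bc_right (k j : ℕ) : bS (k + 1 + j) k * (cS (k + 1 + j) (k + 1) - cS (k + 1 + j) k) =
    -(-1) ^ j * Nat.choose (k + 1 + j) k / ((j + 1) * (2 * k + j + 2)) := by
  rw [cS_right, show k + 1 + j = k + (j + 1) by ring, bS_fac, choose_fac,
    show 2 * k + (j + 1) = 2 * k + j + 1 by ring, Nat.factorial_succ (2 * k + j + 1),
    Nat.factorial_succ j]
  have h1 : (k.factorial : ℝ) ≠ 0 := by positivity
  have h2 : (j.factorial : ℝ) ≠ 0 := by positivity
  have h3 : ((2 * k + j + 1).factorial : ℝ) ≠ 0 := by positivity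
  have h4 : (2 * k + j + 2 : ℝ) ≠ 0 := by positivity
  push_cast
  rw [show (2 * k + j + 1 + 1 : ℝ) = 2 * k + j + 2 by ring]
  field_simp

lemma bS_down (n k j : ℕ) (h : n + 1 = k + j) : bS n k =
    bS (n + 1) k * ((j : ℝ) ^ 2 / ((n + 1) * (n + 1 + k))) := by
  rcases j with _ | j
  · have : n.choose k = 0 := Nat.choose_eq_zero_of_lt (by omega)
    simp [bS, this]
  · obtain rfl : n = k + j := by omega
    rw [bS_up]
    have : (k + j + 1 + k : ℝ) = 2 * k + j + 1 := by ring
    have h4 : (2 * k + j + 1 : ℝ) ≠ 0 := by positivity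
    push_cast
    rw [this]
    field_simp

lemma bc_down (n k j : ℕ) (h : n + 1 = k + j) : bS n k * (cS (n + 1) k - cS n k) =
    -2 * (-1) ^ j * j * Nat.choose (n + 1) k / ((n + 1) ^ 2 * (n + 1 + k)) := by
  rcases j with _ | j
  · have : n.choose k = 0 := Nat.choose_eq_zero_of_lt (by omega)
    simp [bS, this]
  · obtain rfl : n = k + j := by omega
    rw [bc_up, show k + j + 1 = k + (j + 1) by ring, choose_fac, choose_fac,
      show k + (j + 1) = k + j + 1 by ring, Nat.factorial_succ j, Nat.factorial_succ (k + j)]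
    have : (k + j + 1 + k : ℝ) = 2 * k + j + 1 := by ring
    have h1 : (k.factorial : ℝ) ≠ 0 := by positivity
    have h2 : (j.factorial : ℝ) ≠ 0 := by positivity
    have h4 : (2 * k + j + 1 : ℝ) ≠ 0 := by positivity
    push_cast
    rw [this]
    field_simp
    ring

/-- Summand of the recurrence applied to `∑ b (Z - c)`. -/
noncomputable def termS (Z : ℝ) (n k : ℕ) : ℝ :=
  ((n : ℝ) + 2) ^ 2 * (bS (n + 2) k * (Z - cS (n + 2) k))
    - (11 * ((n : ℝ) + 1) ^ 2 + 11 * ((n : ℝ) + 1) + 3) * (bS (n + 1) k * (Z - cS (n + 1) k))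
    - ((n : ℝ) + 1) ^ 2 * (bS n k * (Z - cS n k))

lemma termS_eq (Z : ℝ) (n k j : ℕ) (h : n + 1 = k + j) : termS Z n k =
    bS (n + 1) k * (Z - cS (n + 1) k) *
      ((n + 2) ^ 3 * (n + 2 + k) / (j + 1) ^ 2 - (11 * ((n : ℝ) + 1) ^ 2 + 11 * ((n : ℝ) + 1) + 3)
        - (n + 1) * (j : ℝ) ^ 2 / (n + 1 + k))
    + (-1) ^ j * Nat.choose (n + 1) k *
      (2 * j / (n + 1 + k) - 2 * (n + 2) ^ 2 / (j + 1) ^ 2) := by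
  have d1 := bS_down n k j h
  have d2 := bc_down n k j h
  have u1 := bS_up k j
  have u2 := bc_up k j
  rw [← h] at u1 u2
  have hj : (n : ℝ) + 1 = k + j := by exact_mod_cast h
  rw [← hj, show (2 * k + j + 1 : ℝ) = n + 2 + k by linarith] at u1 u2
  unfold termS
  have e1 : bS n k * (Z - cS n k) = bS n k * (Z - cS (n + 1) k) + bS n k * (cS (n + 1) k - cS n k) := by
    ring
  have e2 : bS (n + 2) k * (Z - cS (n + 2) k) = ((n + 2) * (n + 2 + k) / (j + 1) ^ 2) *
      (bS (n + 1) k * (Z - cS (n + 1) k) - bS (n + 1) k * (cS (n + 1 + 1) k - cS (n + 1) k)) := by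
    rw [show n + 2 = n + 1 + 1 by ring, u1]
    ring
  rw [e1, e2, d2, u2, d1]
  have p1 : (n + 1 + k : ℝ) ≠ 0 := by positivity
  have p2 : (n + 2 + k : ℝ) ≠ 0 := by positivity
  have p3 : (n + 1 + 1 : ℝ) = n + 2 := by ring
  rw [p3]
  field_simp
  ring

lemma termS_sum (Z : ℝ) (n : ℕ) : ∀ k j : ℕ, n + 1 = k + j →
    ∑ i ∈ range (k + 1), termS Z n i =
      ((k : ℝ) ^ 2 + 3 * (2 * ((n : ℝ) + 1) + 1) * k - 11 * ((n : ℝ) + 1) ^ 2 - 9 * ((n : ℝ) + 1) - 2)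
        * (bS (n + 1) k * (Z - cS (n + 1) k))
      + 3 * k / ((n : ℝ) + 1) * (-1) ^ j * Nat.choose (n + 1) k := by
  intro k
  induction k with
  | zero =>
    intro j h
    have hj : (n : ℝ) + 1 = j := by simpa using congrArg (Nat.cast (R := ℝ)) h
    rw [Finset.sum_range_one, termS_eq Z n 0 j h, ← hj]
    push_cast
    have : (n : ℝ) + 1 + 1 ≠ 0 := by positivity
    have p3 : (n + 2 : ℝ) = n + 1 + 1 := by ring
    rw [p3]
    field_simp
    ring
  | succ k ih =>
    intro j h
    have i1 := ih (j + 1) (by omega)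
    have r1 := bS_right k j
    have r2 := bc_right k j
    have r3 := choose_right k j
    rw [← h] at r1 r2 r3
    rw [Finset.sum_range_succ, i1, termS_eq Z n (k + 1) j h]
    have e1 : bS (n + 1) k * (Z - cS (n + 1) k) = bS (n + 1) k * (Z - cS (n + 1) (k + 1))
       + bS (n + 1) k * (cS (n + 1) (k + 1) - cS (n + 1) k) := by ring
    rw [e1, r2, r1, r3]
    have hj : (n : ℝ) = k + j := by
      have : n = k + j := by omega
      exact_mod_cast this
    push_cast
    rw [hj]
    generalize bS (n + 1) (k + 1) = b
    generalize cS (n + 1) (k + 1) = c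
    generalize ((n + 1).choose (k + 1) : ℝ) = C
    have hk0 : (0 : ℝ) ≤ k := Nat.cast_nonneg k
    have hj0 : (0 : ℝ) ≤ j := Nat.cast_nonneg j
    rw [pow_succ (-1 : ℝ) j]
    generalize (-1 : ℝ) ^ j = s
    generalize (k : ℝ) = x at *
    generalize (j : ℝ) = y at *
    rw [show x + y + 1 + (x + 1) = 2 * x + y + 2 by ring]
    have p1 : 2 * x + y + 2 ≠ 0 := by positivity
    have p2 : x + y + 1 ≠ 0 := by positivity
    field_simp
    ring

/-- The error term. -/
noncomputable def ES (Z : ℝ) (n : ℕ) : ℝ := ∑ k ∈ range (n + 1), bS n k * (Z - cS n k)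

lemma ES_rec (Z : ℝ) (n : ℕ) :
    ((n : ℝ) + 2) ^ 2 * ES Z (n + 2) - (11 * ((n : ℝ) + 1) ^ 2 + 11 * ((n : ℝ) + 1) + 3) * ES Z (n + 1)
      - ((n : ℝ) + 1) ^ 2 * ES Z n = 0 := by
  have hs := termS_sum Z n (n + 1) 0 (by omega)
  simp only [termS, Finset.sum_sub_distrib, ← Finset.mul_sum] at hs
  have z : bS n (n + 1) = 0 := by simp [bS]
  have e0 : ∑ i ∈ range (n + 1 + 1), bS n i * (Z - cS n i) = ES Z n := by
    rw [Finset.sum_range_succ, z, zero_mul, add_zero]; rfl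
  have e1 : ∑ i ∈ range (n + 1 + 1), bS (n + 1) i * (Z - cS (n + 1) i) = ES Z (n + 1) := rfl
  have e2 : ES Z (n + 2) = ∑ i ∈ range (n + 1 + 1), bS (n + 2) i * (Z - cS (n + 2) i)
      + bS (n + 2) (n + 2) * (Z - cS (n + 2) (n + 2)) := by
    unfold ES
    rw [Finset.sum_range_succ]
  rw [e0, e1] at hs
  have u1 := bS_up (n + 1) 0
  have u2 := bc_up (n + 1) 0
  have r1 := bS_right (n + 1) 0
  have r2 := bc_right (n + 1) 0
  simp only [add_zero, Nat.choose_self] at u1 u2 r1 r2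
  rw [show n + 1 + 1 = n + 2 by ring] at u1 u2 r1 r2
  have r4 : ((n + 2).choose (n + 1) : ℝ) = n + 2 := by
    rw [Nat.choose_succ_self_right]; push_cast; ring
  rw [r4] at r2
  rw [e2, mul_add]
  simp only [Nat.choose_self] at hs
  push_cast at *
  have hn0 : (0 : ℝ) ≤ n := Nat.cast_nonneg n
  generalize bS (n + 2) (n + 2) = b22 at *
  generalize bS (n + 2) (n + 1) = b21 at *
  generalize bS (n + 1) (n + 1) = b11 at *
  generalize cS (n + 2) (n + 2) = c22 at *
  generalize cS (n + 2) (n + 1) = c21 at *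
  generalize cS (n + 1) (n + 1) = c11 at *
  generalize (n : ℝ) = x at *
  have q1 : b22 = b11 * (2 * (2 * x + 3) / (x + 2)) := by
    rw [u1] at r1
    field_simp at r1 ⊢
    nlinarith [r1]
  have q2 : b11 * (c21 - c11) = 2 / ((x + 2) * (2 * x + 3)) := by
    rw [u2, pow_zero]
    rw [show 2 * (x + 1) + 0 + 1 = 2 * x + 3 by ring, show x + 1 + 0 + 1 = x + 2 by ring]
    ring
  have q3 : b11 * (c22 - c21) = -1 / ((2 * x + 3) * (2 * x + 4)) := by
    rw [u1] at r2
    rw [show 2 * (x + 1) + 0 + 2 = 2 * x + 4 by ring] at r2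
    rw [show 2 * (x + 1) + 0 + 1 = 2 * x + 3 by ring, show x + 1 + 0 + 1 = x + 2 by ring] at r2
    have w : b11 * (c22 - c21) * ((x + 2) * (2 * x + 3)) = -(x + 2) / (2 * x + 4) := by
      rw [pow_zero] at r2
      norm_num at r2
      have r5 : b11 * (c22 - c21) * ((x + 2) * (2 * x + 3))
          = b11 * ((x + 2) * (2 * x + 3)) * (c22 - c21) := by ring
      rw [r5, r2]; ring
    rw [eq_div_iff (by positivity)]
    rw [eq_div_iff (by positivity)] at w
    have : x + 2 ≠ 0 := by positivity
    apply mul_left_cancel₀ this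
    linarith
  have q4 : b11 * (Z - c22) = b11 * (Z - c11) - 2 / ((x + 2) * (2 * x + 3))
     + 1 / ((2 * x + 3) * (2 * x + 4)) := by
    have : b11 * (Z - c22) = b11 * (Z - c11) - b11 * (c21 - c11) - b11 * (c22 - c21) := by ring
    rw [this, q2, q3]; ring
  have q5 : (x + 2) ^ 2 * (b22 * (Z - c22)) = 2 * (x + 2) * (2 * x + 3) * (b11 * (Z - c11)) - 3 := by
    have : (x + 2) ^ 2 * (b22 * (Z - c22)) =
      (x + 2) ^ 2 * (2 * (2 * x + 3) / (x + 2)) * (b11 * (Z - c22)) := by rw [q1]; ring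
    rw [this, q4, show 2 * x + 4 = 2 * (x + 2) by ring]
    field_simp
    ring
  have q6 : 3 * (x + 1) / (x + 1) * (-1 : ℝ) ^ 0 * 1 = 3 := by field_simp
  rw [q6] at hs
  rw [q5]
  linarith

lemma ES_zero (Z : ℝ) : ES Z 0 = Z := by simp [ES, bS, cS]

lemma ES_one (Z : ℝ) : ES Z 1 = 3 * Z - 5 := by
  simp [ES, bS, cS, Finset.sum_range_succ]
  ring

lemma ES_eq_RS (n : ℕ) : ES (π ^ 2 / 6) n = RS n ∧ ES (π ^ 2 / 6) (n + 1) = RS (n + 1) := by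
  induction n with
  | zero => exact ⟨by rw [ES_zero, RS_zero], by rw [ES_one, RS_one]⟩
  | succ n ih =>
    refine ⟨ih.2, ?_⟩
    have h1 := ES_rec (π ^ 2 / 6) n
    have h2 := RS_rec n
    rw [ih.1, ih.2] at h1
    have h3 : ((n : ℝ) + 2) ^ 2 ≠ 0 := by positivity
    apply mul_left_cancel₀ h3
    show ((n : ℝ) + 2) ^ 2 * ES (π ^ 2 / 6) (n + 2) = ((n : ℝ) + 2) ^ 2 * RS (n + 2)
    linarith

/-- **The signed error sum of Apéry's continued fraction for `ζ(2)` as a double series.**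
`∑ₙ (Bₙ ζ(2) − Aₙ) = ∑ₙ ∑ₖ (−1)ⁿ C(n+k,n)/((2n+k+1)² C(2n+k,n)²)`, where `ζ(2) = π²/6`. -/
theorem error_sum_apery_zeta_two :
    ∑' n : ℕ, (aperyB2 n * (π ^ 2 / 6) - aperyA2 n)
      = ∑' n : ℕ, ∑' k : ℕ,
          (-1 : ℝ) ^ n * (Nat.choose (n + k) n : ℝ) /
            ((2 * (n : ℝ) + k + 1) ^ 2 * (Nat.choose (2 * n + k) n : ℝ) ^ 2) := by
  refine tsum_congr fun n => ?_
  simp only [tS_eq]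
  have h := (ES_eq_RS n).1
  unfold RS at h
  rw [← h]
  unfold ES aperyB2 aperyA2
  rw [Finset.sum_mul, ← Finset.sum_sub_distrib]
  refine Finset.sum_congr rfl fun k _ => ?_
  unfold bS cS
  ring
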